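/- For every T > 0 there exists a constant C = C(T) > 0, independent of n, such that for all integers n ≥ 2 and all (t,x) ∈ (0,T] × (0,π): ∫₀ᵗ ∫₀^π |Δ_nG^n_s(x,y) - ΔG_s(x,y)| dy ds ≤ C n^{-1}, and ∫₀ᵗ ∫₀^π |G^n_s(x,y) - G_s(x,y)|² dy ds ≤ C n^{-2}. -/

import Mathlib

noncomputable section

open Real intervalIntegral

/-- The Dirichlet eigenfunctions `φ_j(x) = √(2/π) sin(jx)` on `(0,π)`. -/
def phiF (j : ℕ) (x : ℝ) : ℝ := Real.sqrt (2 / Real.pi) * Real.sin (j * x)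

/-- The Green function of `∂_t + Δ²` with Dirichlet boundary conditions on `(0,π)`:
`G_t(x,y) = Σ_{j≥1} e^{-j⁴ t} φ_j(x) φ_j(y)`. -/
def GF (t x y : ℝ) : ℝ :=
  ∑' j : ℕ, Real.exp (-((j : ℝ) + 1) ^ 4 * t) * phiF (j + 1) x * phiF (j + 1) y

/-- `ΔG_t(x,y) = -Σ_{j≥1} j² e^{-j⁴ t} φ_j(x) φ_j(y)`. -/
def DGF (t x y : ℝ) : ℝ :=
  -∑' j : ℕ, ((j : ℝ) + 1) ^ 2 * Real.exp (-((j : ℝ) + 1) ^ 4 * t) * phiF (j + 1) x * phiF (j + 1) y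

/-- The grid projection `κ_n(y) = h⌊y/h⌋` with `h = π/n`. -/
def kap (n : ℕ) (y : ℝ) : ℝ := (Real.pi / n) * ⌊y / (Real.pi / n)⌋

/-- The eigenvalue `λ_{j,n} = -(4n²/π²) sin²(jπ/(2n))` of the discrete Dirichlet Laplacian. -/
def lamEig (j n : ℕ) : ℝ :=
  -(4 * (n : ℝ) ^ 2 / Real.pi ^ 2) * Real.sin ((j : ℝ) * Real.pi / (2 * n)) ^ 2

/-- The piecewise-linear interpolant `φ_{j,n}` of `φ_j` on the grid `{0, h, …, π}`. -/
def phiIn (n j : ℕ) (x : ℝ) : ℝ :=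
  phiF j (kap n x)
    + ((n : ℝ) / Real.pi) * (x - kap n x) * (phiF j (kap n x + Real.pi / n) - phiF j (kap n x))

/-- The spatially discrete Green function
`G^n_t(x,y) = Σ_{j=1}^{n-1} e^{-λ_{j,n}² t} φ_{j,n}(x) φ_j(κ_n(y))`. -/
def Gn (n : ℕ) (t x y : ℝ) : ℝ :=
  ∑ j ∈ Finset.range (n - 1),
    Real.exp (-(lamEig (j + 1) n) ^ 2 * t) * phiIn n (j + 1) x * phiF (j + 1) (kap n y)

/-- `Δ_nG^n_t(x,y) = Σ_{j=1}^{n-1} λ_{j,n} e^{-λ_{j,n}² t} φ_{j,n}(x) φ_j(κ_n(y))`. -/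
def DGn (n : ℕ) (t x y : ℝ) : ℝ :=
  ∑ j ∈ Finset.range (n - 1),
    lamEig (j + 1) n * Real.exp (-(lamEig (j + 1) n) ^ 2 * t)
      * phiIn n (j + 1) x * phiF (j + 1) (kap n y)

/-- The fully discrete Green function
`G^{n,τ}_t(x,y) = Σ_{j=1}^{n-1} (1 + τλ_{j,n}²)^{-⌊t/τ⌋} φ_{j,n}(x) φ_j(κ_n(y))`. -/
def Gnt (n : ℕ) (τ t x y : ℝ) : ℝ :=
  ∑ j ∈ Finset.range (n - 1),
    ((1 + τ * (lamEig (j + 1) n) ^ 2) ^ (⌊t / τ⌋₊))⁻¹ * phiIn n (j + 1) x * phiF (j + 1) (kap n y)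

/-- `Δ_nG^{n,τ}_t(x,y) = Σ_{j=1}^{n-1} λ_{j,n} (1 + τλ_{j,n}²)^{-⌊t/τ⌋} φ_{j,n}(x) φ_j(κ_n(y))`. -/
def DGnt (n : ℕ) (τ t x y : ℝ) : ℝ :=
  ∑ j ∈ Finset.range (n - 1),
    lamEig (j + 1) n * ((1 + τ * (lamEig (j + 1) n) ^ 2) ^ (⌊t / τ⌋₊))⁻¹
      * phiIn n (j + 1) x * phiF (j + 1) (kap n y)

/-!
Every Green function here is a sine series in `y`, so by orthonormality of `√(2/π) sin(jy)` its
error has two parts. Replacing `y` by `κ_n(y)` in a sine series costs `h` times the `L²` norm of its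
derivative, a cosine series, by a Poincaré inequality on each grid cell. Replacing the discrete
coefficients by the continuous ones costs the `ℓ²` norm of their difference, which is controlled by
`j² + λ_{j,n} ≤ 4 (j/n) j²`, `-λ_{j,n} ≥ j²/4` and `|φ_{j,n} - φ_j| ≤ jπ/n`. For the `r`-th power
of the Laplacian both are of order `n⁻¹` times the `ℓ²` norm of `j^(2r+1) exp(-j⁴s/32)`, that is, at
most `C n⁻¹ s^(-p/2) exp(-s/64)` for any `p > r + 3/4`. With `r = 0` and `p < 1` the square is
integrable in time; with `r = 1` and `p < 2` the `L²` norm itself is, and it dominates the `L¹` norm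
by Cauchy–Schwarz. The exponential factor makes the constant independent of the time horizon.
-/

open MeasureTheory

/-! ### The Cauchy–Schwarz inequality on an interval -/

lemma sq_intervalIntegral_le {f : ℝ → ℝ} {a b : ℝ} (hab : a ≤ b)
    (hf : IntervalIntegrable f volume a b)
    (hf2 : IntervalIntegrable (fun y => f y ^ 2) volume a b) :
    (∫ y in a..b, f y) ^ 2 ≤ (b - a) * ∫ y in a..b, f y ^ 2 := by
  have expand : ∀ t : ℝ, ∫ y in a..b, (t - f y) ^ 2
      = (b - a) * (t * t) + (-2 * ∫ y in a..b, f y) * t + ∫ y in a..b, f y ^ 2 := by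
    intro t
    have hpt : ∀ y, (t - f y) ^ 2 = t * t - 2 * t * f y + f y ^ 2 := fun y => by ring
    simp only [hpt]
    rw [intervalIntegral.integral_add (intervalIntegrable_const.sub (hf.const_mul _)) hf2,
      intervalIntegral.integral_sub intervalIntegrable_const (hf.const_mul _),
      intervalIntegral.integral_const, intervalIntegral.integral_const_mul, smul_eq_mul]
    ring
  have hdiscrim := discrim_le_zero fun t => (expand t) ▸
    intervalIntegral.integral_nonneg hab fun y _ => sq_nonneg (t - f y)
  rw [discrim] at hdiscrim
  linarith

lemma sq_sub_le_mul_integral_deriv_sq {f f' : ℝ → ℝ} {a b y : ℝ}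
    (hf : ∀ z, HasDerivAt f (f' z) z) (hf' : Continuous f') (hy : y ∈ Set.Icc a b) :
    (f a - f y) ^ 2 ≤ (b - a) * ∫ z in a..b, f' z ^ 2 := by
  have hftc : ∫ z in a..y, f' z = f y - f a :=
    intervalIntegral.integral_eq_sub_of_hasDerivAt (fun z _ => hf z)
      (hf'.intervalIntegrable _ _)
  have hmono : ∫ z in a..y, f' z ^ 2 ≤ ∫ z in a..b, f' z ^ 2 :=
    intervalIntegral.integral_mono_interval le_rfl hy.1 hy.2
      (Filter.Eventually.of_forall fun z => sq_nonneg (f' z))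
      ((hf'.pow 2).intervalIntegrable _ _)
  calc (f a - f y) ^ 2 = (∫ z in a..y, f' z) ^ 2 := by rw [hftc]; ring
    _ ≤ (y - a) * ∫ z in a..y, f' z ^ 2 :=
        sq_intervalIntegral_le hy.1 (hf'.intervalIntegrable _ _)
          ((hf'.pow 2).intervalIntegrable _ _)
    _ ≤ (b - a) * ∫ z in a..b, f' z ^ 2 :=
        mul_le_mul (by linarith [hy.2]) hmono
          (intervalIntegral.integral_nonneg hy.1 fun z _ => sq_nonneg _) (by linarith [hy.1, hy.2])

lemma integral_sq_sub_le_mul_integral_deriv_sq {f f' : ℝ → ℝ} {a b : ℝ} (hab : a ≤ b)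
    (hf : ∀ z, HasDerivAt f (f' z) z) (hf' : Continuous f') :
    ∫ y in a..b, (f a - f y) ^ 2 ≤ (b - a) ^ 2 * ∫ z in a..b, f' z ^ 2 := by
  have hf_cont : Continuous f := continuous_iff_continuousAt.2 fun y => (hf y).continuousAt
  calc ∫ y in a..b, (f a - f y) ^ 2
      ≤ ∫ _ in a..b, (b - a) * ∫ z in a..b, f' z ^ 2 :=
        intervalIntegral.integral_mono_on hab (Continuous.intervalIntegrable (by fun_prop) _ _)
          intervalIntegrable_const fun y hy => sq_sub_le_mul_integral_deriv_sq hf hf' hy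
    _ = (b - a) ^ 2 * ∫ z in a..b, f' z ^ 2 := by
        rw [intervalIntegral.integral_const, smul_eq_mul]; ring

/-! ### The grid projection -/

section GridProjection

variable {n : ℕ}

lemma kap_le (hn : 0 < n) (y : ℝ) : kap n y ≤ y := by
  have := Int.sub_floor_div_mul_nonneg y (by positivity : 0 < π / n)
  rw [kap]; linarith

lemma lt_kap_add (hn : 0 < n) (y : ℝ) : y < kap n y + π / n := by
  have := Int.sub_floor_div_mul_lt y (by positivity : 0 < π / n)
  rw [kap]; linarith

lemma kap_eq_of_mem_Ico (hn : 0 < n) {i : ℕ} {y : ℝ}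
    (hy : y ∈ Set.Ico (i * (π / n)) ((i + 1 : ℕ) * (π / n))) : kap n y = i * (π / n) := by
  have hh : 0 < π / n := by positivity
  have hfloor : ⌊y / (π / n)⌋ = (i : ℤ) := by
    rw [Int.floor_eq_iff, le_div_iff₀ hh, div_lt_iff₀ hh]
    exact_mod_cast hy
  rw [kap, hfloor, Int.cast_natCast, mul_comm]

lemma measurable_kap (n : ℕ) : Measurable (kap n) := by
  have hfloor : Measurable fun y : ℝ => (⌊y / (π / n)⌋ : ℝ) :=
    measurable_from_top.comp (Int.measurable_floor.comp (measurable_id.div_const _))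
  exact hfloor.const_mul _

lemma intervalIntegrable_comp_kap (hn : 0 < n) {F : ℝ → ℝ → ℝ}
    (hF : Continuous (Function.uncurry F)) (a b : ℝ) :
    IntervalIntegrable (fun y => F (kap n y) y) volume a b := by
  have hmeas : Measurable fun y => F (kap n y) y :=
    hF.measurable.comp ((measurable_kap n).prodMk measurable_id)
  obtain ⟨M, hM⟩ := ((isCompact_Icc (a := min a b - π / n) (b := max a b)).prod
    (isCompact_uIcc (a := a) (b := b))).exists_bound_of_continuousOn hF.continuousOn
  rw [intervalIntegrable_iff]
  refine Measure.integrableOn_of_bounded (M := M) (by simp) hmeas.aestronglyMeasurable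
    ((ae_restrict_iff' measurableSet_uIoc).2 (Filter.Eventually.of_forall fun y hy => ?_))
  have hlow := lt_kap_add hn y
  exact hM (kap n y, y) ⟨⟨by linarith [hy.1], (kap_le hn y).trans hy.2⟩, Set.uIoc_subset_uIcc hy⟩

lemma integral_sq_comp_kap_sub_le (hn : 0 < n) {f f' : ℝ → ℝ}
    (hf : ∀ y, HasDerivAt f (f' y) y) (hf' : Continuous f') :
    ∫ y in (0 : ℝ)..π, (f (kap n y) - f y) ^ 2 ≤ (π / n) ^ 2 * ∫ y in (0 : ℝ)..π, f' y ^ 2 := by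
  set h := π / n with h_def
  have hh : 0 < h := by positivity
  have hfc : Continuous f := continuous_iff_continuousAt.2 fun y => (hf y).continuousAt
  have hint : ∀ a b, IntervalIntegrable (fun y => (f (kap n y) - f y) ^ 2) volume a b :=
    intervalIntegrable_comp_kap hn (F := fun z y => (f z - f y) ^ 2) (by fun_prop)
  have hint' : ∀ a b, IntervalIntegrable (fun y => f' y ^ 2) volume a b :=
    (hf'.pow 2).intervalIntegrable
  have hcell : ∀ i : ℕ, ∫ y in (i * h)..((i + 1 : ℕ) * h), (f (kap n y) - f y) ^ 2
      ≤ h ^ 2 * ∫ y in (i * h)..((i + 1 : ℕ) * h), f' y ^ 2 := by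
    intro i
    have hlen : ((i + 1 : ℕ) * h) - i * h = h := by push_cast; ring
    have hkap : ∫ y in (i * h)..((i + 1 : ℕ) * h), (f (kap n y) - f y) ^ 2
        = ∫ y in (i * h)..((i + 1 : ℕ) * h), (f (i * h) - f y) ^ 2 :=
      intervalIntegral.integral_congr_Ioo_of_le (by linarith) fun y hy => by
        simp only [kap_eq_of_mem_Ico hn (Set.Ioo_subset_Ico_self hy), ← h_def]
    rw [hkap]
    exact (integral_sq_sub_le_mul_integral_deriv_sq (by linarith) hf hf').trans_eq (by rw [hlen])
  have hsum : ∀ {F : ℝ → ℝ}, (∀ a b, IntervalIntegrable F volume a b) →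
      ∑ i ∈ Finset.range n, ∫ y in (i * h)..((i + 1 : ℕ) * h), F y = ∫ y in (0 : ℝ)..π, F y := by
    intro F hF
    have hend : n * h = π := by rw [h_def]; field_simp
    simpa only [Nat.cast_zero, zero_mul, hend] using
      intervalIntegral.sum_integral_adjacent_intervals (a := fun i : ℕ => i * h) (n := n)
        fun i _ => hF _ _
  rw [← hsum hint, ← hsum hint', Finset.mul_sum]
  exact Finset.sum_le_sum fun i _ => hcell i

end GridProjection

/-! ### Parseval's identity -/

section Parseval

variable {ι : Type*} {e : ι → ℝ → ℝ} {c : ι → ℝ} {a b M : ℝ}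

lemma norm_mul_le_abs_mul (hM : ∀ i y, |e i y| ≤ M) (i : ι) (y : ℝ) :
    ‖c i * e i y‖ ≤ |c i| * M :=
  norm_mul_le_of_le le_rfl (hM i y)

lemma continuous_tsum_mul (he : ∀ i, Continuous (e i)) (hM : ∀ i y, |e i y| ≤ M)
    (hc : Summable c) : Continuous fun y => ∑' i, c i * e i y :=
  continuous_tsum (fun i => (he i).const_mul (c i)) (hc.abs.mul_right M)
    (norm_mul_le_abs_mul hM)

lemma hasSum_integral_mul_tsum [Countable ι] (he : ∀ i, Continuous (e i)) (hM : ∀ i y, |e i y| ≤ M)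
    (hc : Summable c) {g : ℝ → ℝ} (hg : Continuous g) :
    HasSum (fun i => c i * ∫ y in a..b, g y * e i y)
      (∫ y in a..b, g y * ∑' i, c i * e i y) := by
  have hswap : ∀ i, c i * ∫ y in a..b, g y * e i y = ∫ y in a..b, g y * (c i * e i y) := by
    intro i
    rw [← intervalIntegral.integral_const_mul]
    congr 1 with y
    ring
  simp only [hswap]
  have hsummable : ∀ y, Summable fun i => |g y| * (|c i| * M) := fun y =>
    (hc.abs.mul_right M).mul_left _
  refine intervalIntegral.hasSum_integral_of_dominated_convergence
    (fun i y => |g y| * (|c i| * M))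
    (fun i => (hg.mul ((he i).const_mul _)).aestronglyMeasurable)
    (fun i => Filter.Eventually.of_forall fun y _ => ?_)
    (Filter.Eventually.of_forall fun y _ => hsummable y) ?_
    (Filter.Eventually.of_forall fun y _ => ?_)
  · rw [norm_mul, Real.norm_eq_abs]
    exact mul_le_mul_of_nonneg_left (norm_mul_le_abs_mul hM i y) (abs_nonneg _)
  · simp only [tsum_mul_left]
    exact (hg.abs.mul continuous_const).intervalIntegrable _ _
  · exact (Summable.of_norm_bounded (hc.abs.mul_right M)
      fun i => norm_mul_le_abs_mul hM i y).hasSum.mul_left _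

lemma hasSum_sq_of_orthonormal [Countable ι] [DecidableEq ι]
    (he : ∀ i, Continuous (e i)) (hM : ∀ i y, |e i y| ≤ M)
    (horth : ∀ i j, ∫ y in a..b, e i y * e j y = if i = j then 1 else 0) (hc : Summable c) :
    HasSum (fun i => c i ^ 2) (∫ y in a..b, (∑' i, c i * e i y) ^ 2) := by
  have hcoeff : ∀ i, ∫ y in a..b, (∑' k, c k * e k y) * e i y = c i := by
    intro i
    have hsum := hasSum_integral_mul_tsum (a := a) (b := b) he hM hc (he i)
    have hsingle := hasSum_single (f := fun k => c k * ∫ y in a..b, e i y * e k y) i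
      fun k hk => by rw [horth, if_neg hk.symm, mul_zero]
    simpa only [horth, if_true, mul_one, mul_comm (e i _)] using hsum.unique hsingle
  have hsum := hasSum_integral_mul_tsum (a := a) (b := b) he hM hc (continuous_tsum_mul he hM hc)
  simpa only [hcoeff, ← sq] using hsum

end Parseval

/-! ### Sine and cosine series on `(0, π)` -/

/-- The Neumann eigenfunctions `ψ_j(x) = √(2/π) cos(jx)`, in which derivatives of sine series
expand. -/
def psiF (j : ℕ) (x : ℝ) : ℝ := √(2 / π) * cos (j * x)

/-- The sine series with coefficients `c`; as in `GF`, the index is shifted so that `c j`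
multiplies `φ_{j+1}`. -/
def sineSeries (c : ℕ → ℝ) (y : ℝ) : ℝ := ∑' j, c j * phiF (j + 1) y

lemma continuous_phiF (j : ℕ) : Continuous (phiF j) := by
  unfold phiF; fun_prop

lemma continuous_psiF (j : ℕ) : Continuous (psiF j) := by
  unfold psiF; fun_prop

lemma sqrt_two_div_pi_le_one : √(2 / π) ≤ 1 := by
  rw [Real.sqrt_le_iff, one_pow, div_le_one pi_pos]
  exact ⟨zero_le_one, two_le_pi⟩

lemma abs_phiF_le_one (j : ℕ) (x : ℝ) : |phiF j x| ≤ 1 := by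
  rw [phiF, abs_mul, abs_of_nonneg (sqrt_nonneg _)]
  exact mul_le_one₀ sqrt_two_div_pi_le_one (abs_nonneg _) (abs_sin_le_one _)

lemma abs_psiF_le_one (j : ℕ) (x : ℝ) : |psiF j x| ≤ 1 := by
  rw [psiF, abs_mul, abs_of_nonneg (sqrt_nonneg _)]
  exact mul_le_one₀ sqrt_two_div_pi_le_one (abs_nonneg _) (abs_cos_le_one _)

lemma abs_phiF_sub_le (j : ℕ) (x y : ℝ) : |phiF j x - phiF j y| ≤ j * |x - y| := by
  rw [phiF, phiF, ← mul_sub, abs_mul, abs_of_nonneg (sqrt_nonneg _)]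
  calc √(2 / π) * |sin (j * x) - sin (j * y)|
      ≤ 1 * |j * x - j * y| :=
        mul_le_mul sqrt_two_div_pi_le_one (abs_sin_sub_sin_le _ _) (abs_nonneg _) zero_le_one
    _ = j * |x - y| := by rw [one_mul, ← mul_sub, abs_mul, Nat.abs_cast]

lemma hasDerivAt_phiF (j : ℕ) (x : ℝ) : HasDerivAt (phiF j) (j * psiF j x) x := by
  have hlin : HasDerivAt (fun y : ℝ => j * y) j x := by
    simpa using (hasDerivAt_id x).const_mul (j : ℝ)
  exact (hlin.sin.const_mul √(2 / π)).congr_deriv (by rw [psiF]; ring)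

lemma integral_cos_int_mul (m : ℤ) :
    ∫ y in (0 : ℝ)..π, cos (m * y) = if m = 0 then π else 0 := by
  split_ifs with hm
  · simp [hm]
  · rw [intervalIntegral.integral_comp_mul_left (fun y => cos y) (Int.cast_ne_zero.2 hm),
      integral_cos]
    simp [sin_int_mul_pi]

lemma integral_inv_pi_mul_cos_sub_add_cos_add (ε : ℝ) (j k : ℕ) :
    ∫ y in (0 : ℝ)..π, π⁻¹ * (cos ((j + 1 : ℕ) * y - (k + 1 : ℕ) * y)
      + ε * cos ((j + 1 : ℕ) * y + (k + 1 : ℕ) * y)) = if j = k then 1 else 0 := by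
  have hsub : ∀ y : ℝ, (j + 1 : ℕ) * y - (k + 1 : ℕ) * y = (j - k : ℤ) * y := fun y => by
    push_cast; ring
  have hadd : ∀ y : ℝ, (j + 1 : ℕ) * y + (k + 1 : ℕ) * y = (j + k + 2 : ℤ) * y := fun y => by
    push_cast; ring
  simp only [hsub, hadd]
  rw [intervalIntegral.integral_const_mul, intervalIntegral.integral_add
    (Continuous.intervalIntegrable (by fun_prop) _ _)
    (Continuous.intervalIntegrable (by fun_prop) _ _), intervalIntegral.integral_const_mul,
    integral_cos_int_mul, integral_cos_int_mul, if_neg (by lia : (j + k + 2 : ℤ) ≠ 0)]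
  simp only [sub_eq_zero, Nat.cast_inj, mul_zero, add_zero, mul_ite, inv_mul_cancel₀ pi_ne_zero]

lemma sqrt_two_div_pi_mul_self : √(2 / π) * √(2 / π) = 2 / π :=
  mul_self_sqrt (by positivity)

lemma integral_phiF_mul_phiF (j k : ℕ) :
    ∫ y in (0 : ℝ)..π, phiF (j + 1) y * phiF (k + 1) y = if j = k then 1 else 0 := by
  rw [← integral_inv_pi_mul_cos_sub_add_cos_add (-1) j k]
  congr 1 with y
  have hprod := two_mul_sin_mul_sin ((j + 1 : ℕ) * y) ((k + 1 : ℕ) * y)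
  rw [phiF, phiF, mul_mul_mul_comm, sqrt_two_div_pi_mul_self]
  linear_combination π⁻¹ * hprod

lemma integral_psiF_mul_psiF (j k : ℕ) :
    ∫ y in (0 : ℝ)..π, psiF (j + 1) y * psiF (k + 1) y = if j = k then 1 else 0 := by
  rw [← integral_inv_pi_mul_cos_sub_add_cos_add 1 j k]
  congr 1 with y
  have hprod := two_mul_cos_mul_cos ((j + 1 : ℕ) * y) ((k + 1 : ℕ) * y)
  rw [psiF, psiF, mul_mul_mul_comm, sqrt_two_div_pi_mul_self]
  linear_combination π⁻¹ * hprod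

section SineSeries

variable {c : ℕ → ℝ}

lemma summable_of_summable_succ_mul (hc : Summable fun j : ℕ => (j + 1 : ℝ) * c j) :
    Summable c :=
  .of_norm_bounded hc.abs fun j => by
    rw [abs_mul, Real.norm_eq_abs]
    exact le_mul_of_one_le_left (abs_nonneg _)
      ((by simp : (1 : ℝ) ≤ j + 1).trans (le_abs_self _))

lemma summable_mul_phiF (hc : Summable c) (y : ℝ) : Summable fun j => c j * phiF (j + 1) y :=
  .of_norm_bounded (hc.abs.mul_right 1) fun j =>
    norm_mul_le_abs_mul (fun j => abs_phiF_le_one (j + 1)) j y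

lemma continuous_sineSeries (hc : Summable c) : Continuous (sineSeries c) :=
  continuous_tsum_mul (fun j => continuous_phiF (j + 1)) (fun j => abs_phiF_le_one (j + 1)) hc

lemma sineSeries_sub {d : ℕ → ℝ} (hc : Summable c) (hd : Summable d) (y : ℝ) :
    sineSeries (c - d) y = sineSeries c y - sineSeries d y := by
  simp only [sineSeries, Pi.sub_apply, sub_mul,
    (summable_mul_phiF hc y).tsum_sub (summable_mul_phiF hd y)]

lemma hasSum_sq_sineSeries (hc : Summable c) :
    HasSum (fun j => c j ^ 2) (∫ y in (0 : ℝ)..π, sineSeries c y ^ 2) :=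
  hasSum_sq_of_orthonormal (fun j => continuous_phiF (j + 1)) (fun j => abs_phiF_le_one (j + 1))
    integral_phiF_mul_phiF hc

lemma hasDerivAt_sineSeries (hc : Summable fun j : ℕ => (j + 1 : ℝ) * c j) (y : ℝ) :
    HasDerivAt (sineSeries c) (∑' j : ℕ, (j + 1 : ℝ) * c j * psiF (j + 1) y) y := by
  refine hasDerivAt_tsum (hc.abs.mul_right 1) (fun j z => ?_)
    (norm_mul_le_abs_mul fun j => abs_psiF_le_one (j + 1))
    (summable_mul_phiF (summable_of_summable_succ_mul hc) 0) y
  exact ((hasDerivAt_phiF (j + 1) z).const_mul (c j)).congr_deriv (by push_cast; ring)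

lemma integral_sq_sineSeries_comp_kap_sub_le {n : ℕ} (hn : 0 < n)
    (hc : Summable fun j : ℕ => (j + 1 : ℝ) * c j) :
    ∫ y in (0 : ℝ)..π, (sineSeries c (kap n y) - sineSeries c y) ^ 2
      ≤ (π / n) ^ 2 * ∑' j : ℕ, ((j + 1 : ℝ) * c j) ^ 2 := by
  have hψ : ∀ j, Continuous (psiF (j + 1)) := fun j => continuous_psiF (j + 1)
  have hψ_le : ∀ j y, |psiF (j + 1) y| ≤ 1 := fun j => abs_psiF_le_one (j + 1)
  rw [(hasSum_sq_of_orthonormal hψ hψ_le integral_psiF_mul_psiF hc).tsum_eq]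
  exact integral_sq_comp_kap_sub_le hn (hasDerivAt_sineSeries hc) (continuous_tsum_mul hψ hψ_le hc)

lemma integral_sq_sineSeries_comp_kap_sub_sineSeries_le {n : ℕ} (hn : 0 < n) {a b : ℕ → ℝ}
    (hb : Summable fun j : ℕ => (j + 1 : ℝ) * b j) (ha : Summable a) :
    ∫ y in (0 : ℝ)..π, (sineSeries b (kap n y) - sineSeries a y) ^ 2
      ≤ 2 * ((π / n) ^ 2 * ∑' j : ℕ, ((j + 1 : ℝ) * b j) ^ 2 + ∑' j, (b j - a j) ^ 2) := by
  have hb₀ : Summable b := summable_of_summable_succ_mul hb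
  have hba : Summable (b - a) := hb₀.sub ha
  have ha_cont := continuous_sineSeries ha
  have hb_cont := continuous_sineSeries hb₀
  have hint_grid : IntervalIntegrable (fun y => (sineSeries b (kap n y) - sineSeries b y) ^ 2)
      volume 0 π :=
    intervalIntegrable_comp_kap hn (F := fun z y => (sineSeries b z - sineSeries b y) ^ 2)
      (by fun_prop) 0 π
  have hint_coeff : IntervalIntegrable (fun y => sineSeries (b - a) y ^ 2) volume 0 π :=
    ((continuous_sineSeries hba).pow 2).intervalIntegrable 0 π
  have hsplit : ∀ y, (sineSeries b (kap n y) - sineSeries a y) ^ 2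
      ≤ 2 * ((sineSeries b (kap n y) - sineSeries b y) ^ 2 + sineSeries (b - a) y ^ 2) := by
    intro y
    rw [sineSeries_sub hb₀ ha,
      ← sub_add_sub_cancel (sineSeries b (kap n y)) (sineSeries b y) (sineSeries a y)]
    exact add_sq_le
  calc ∫ y in (0 : ℝ)..π, (sineSeries b (kap n y) - sineSeries a y) ^ 2
      ≤ ∫ y in (0 : ℝ)..π,
          2 * ((sineSeries b (kap n y) - sineSeries b y) ^ 2 + sineSeries (b - a) y ^ 2) :=
        intervalIntegral.integral_mono pi_pos.le (intervalIntegrable_comp_kap hn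
          (F := fun z y => (sineSeries b z - sineSeries a y) ^ 2) (by fun_prop) 0 π)
          ((hint_grid.add hint_coeff).const_mul 2) hsplit
    _ = 2 * ((∫ y in (0 : ℝ)..π, (sineSeries b (kap n y) - sineSeries b y) ^ 2)
          + ∫ y in (0 : ℝ)..π, sineSeries (b - a) y ^ 2) := by
        rw [intervalIntegral.integral_const_mul, intervalIntegral.integral_add hint_grid hint_coeff]
    _ ≤ 2 * ((π / n) ^ 2 * ∑' j : ℕ, ((j + 1 : ℝ) * b j) ^ 2 + ∑' j, (b j - a j) ^ 2) := by
        gcongr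
        · exact integral_sq_sineSeries_comp_kap_sub_le hn hb
        · exact (hasSum_sq_sineSeries hba).tsum_eq.ge

lemma integral_sq_sineSeries_comp_kap_sub_sineSeries_le_of_abs_le {n : ℕ} (hn : 0 < n)
    {a b w : ℕ → ℝ} (hw : Summable w) (ha : Summable a) (hb : ∀ j : ℕ, (j + 1) * |b j| ≤ w j)
    (hab : ∀ j, n * |b j - a j| ≤ w j) :
    ∫ y in (0 : ℝ)..π, (sineSeries b (kap n y) - sineSeries a y) ^ 2
      ≤ 2 * (π ^ 2 + 1) * ((n : ℝ) ^ 2)⁻¹ * ∑' j, w j ^ 2 := by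
  have hw2 : Summable fun j => w j ^ 2 := (hasSum_sq_sineSeries hw).summable
  have tsum_sq_le : ∀ {v : ℕ → ℝ}, (∀ j, |v j| ≤ w j) → ∑' j, v j ^ 2 ≤ ∑' j, w j ^ 2 := by
    intro v hv
    have hsq : ∀ j, v j ^ 2 ≤ w j ^ 2 := fun j => sq_le_sq.2 ((hv j).trans (le_abs_self _))
    exact (hw2.of_nonneg_of_le (fun _ => sq_nonneg _) hsq).tsum_le_tsum hsq hw2
  have hb' : ∀ j : ℕ, |(j + 1 : ℝ) * b j| ≤ w j := fun j => by
    rw [abs_mul, abs_of_nonneg (by positivity : (0 : ℝ) ≤ j + 1)]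
    exact hb j
  have hgrid := tsum_sq_le hb'
  have hcoeff : (n : ℝ) ^ 2 * ∑' j, (b j - a j) ^ 2 ≤ ∑' j, w j ^ 2 := by
    simp only [← tsum_mul_left, ← mul_pow]
    refine tsum_sq_le fun j => ?_
    rw [abs_mul, Nat.abs_cast]
    exact hab j
  calc ∫ y in (0 : ℝ)..π, (sineSeries b (kap n y) - sineSeries a y) ^ 2
      ≤ 2 * ((π / n) ^ 2 * ∑' j : ℕ, ((j + 1 : ℝ) * b j) ^ 2 + ∑' j, (b j - a j) ^ 2) :=
        integral_sq_sineSeries_comp_kap_sub_sineSeries_le hn (.of_norm_bounded hw hb') ha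
    _ = 2 * ((n : ℝ) ^ 2)⁻¹ * (π ^ 2 * ∑' j : ℕ, ((j + 1 : ℝ) * b j) ^ 2
          + n ^ 2 * ∑' j, (b j - a j) ^ 2) := by field_simp
    _ ≤ 2 * ((n : ℝ) ^ 2)⁻¹ * (π ^ 2 * ∑' j, w j ^ 2 + ∑' j, w j ^ 2) := by gcongr
    _ = 2 * (π ^ 2 + 1) * ((n : ℝ) ^ 2)⁻¹ * ∑' j, w j ^ 2 := by ring

end SineSeries

/-! ### The discrete eigenvalues and eigenfunctions -/

section Discrete

variable {n j : ℕ}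

lemma phiIn_mem_of_convex (hn : 0 < n) {S : Set ℝ} (hS : Convex ℝ S) {x : ℝ}
    (hleft : phiF j (kap n x) ∈ S) (hright : phiF j (kap n x + π / n) ∈ S) : phiIn n j x ∈ S := by
  have hh : 0 < π / n := by positivity
  have hweight : (n : ℝ) / π * (x - kap n x) ∈ Set.Icc (0 : ℝ) 1 := by
    rw [← inv_div, inv_mul_eq_div]
    exact ⟨div_nonneg (sub_nonneg.2 (kap_le hn x)) hh.le,
      (div_le_one hh).2 (by linarith [lt_kap_add hn x])⟩
  exact hS.add_smul_sub_mem hleft hright hweight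

lemma abs_phiIn_le_one (hn : 0 < n) (j : ℕ) (x : ℝ) : |phiIn n j x| ≤ 1 :=
  abs_le.2 (phiIn_mem_of_convex hn (convex_Icc (-1) 1) (abs_le.1 (abs_phiF_le_one j _))
    (abs_le.1 (abs_phiF_le_one j _)))

lemma abs_phiIn_sub_phiF_le (hn : 0 < n) (j : ℕ) (x : ℝ) :
    |phiIn n j x - phiF j x| ≤ j * (π / n) := by
  have hball : ∀ z, |z - x| ≤ π / n → phiF j z ∈ Metric.closedBall (phiF j x) (j * (π / n)) :=
    fun z hz => (abs_phiF_sub_le j z x).trans (mul_le_mul_of_nonneg_left hz j.cast_nonneg)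
  have hle := kap_le hn x
  have hlt := lt_kap_add hn x
  exact phiIn_mem_of_convex hn (convex_closedBall (phiF j x) _)
    (hball _ (abs_le.2 ⟨by linarith, by linarith [pi_pos]⟩))
    (hball _ (abs_le.2 ⟨by linarith, by linarith⟩))

/-- The frequency `(2n/π) sin(jπ/(2n))` of the `j`-th mode on the grid, the discrete counterpart of
`j`: the eigenvalue is `λ_{j,n} = -(discFreq j n)²`. -/
def discFreq (j n : ℕ) : ℝ := 2 * n / π * sin (j * π / (2 * n))

lemma neg_lamEig_eq_sq (j n : ℕ) : -lamEig j n = discFreq j n ^ 2 := by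
  rw [lamEig, discFreq]; ring

lemma discFreq_le (hn : 0 < n) (j : ℕ) : discFreq j n ≤ j := by
  calc discFreq j n ≤ 2 * n / π * (j * π / (2 * n)) := by
        rw [discFreq]; gcongr; exact sin_le (by positivity)
    _ = j := by field_simp

lemma half_le_discFreq (hn : 0 < n) (hj : j ≤ n) : (j : ℝ) / 2 ≤ discFreq j n := by
  have hθ : j * π / (2 * n) ≤ π / 2 := by
    rw [div_le_div_iff₀ (by positivity) two_pos]
    have : (j : ℝ) ≤ n := by exact_mod_cast hj
    nlinarith [pi_pos]
  calc (j : ℝ) / 2 ≤ 2 / π * j := by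
        rw [div_mul_eq_mul_div, div_le_div_iff₀ two_pos pi_pos]
        nlinarith [pi_le_four, j.cast_nonneg (α := ℝ)]
    _ = 2 * n / π * (2 / π * (j * π / (2 * n))) := by field_simp
    _ ≤ discFreq j n := by
        rw [discFreq]; gcongr; exact mul_le_sin (by positivity) hθ

lemma sub_discFreq_le (hn : 0 < n) (hj : j ≤ n) :
    (j : ℝ) - discFreq j n ≤ 2 * (j / n) * j := by
  have hratio : (j : ℝ) / n ≤ 1 := div_le_one_of_le₀ (by exact_mod_cast hj) n.cast_nonneg
  have hpi : π ^ 2 / 24 ≤ 2 := by nlinarith [pi_le_four, pi_pos]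
  have hsin := sin_ge_sub_cube (by positivity : 0 ≤ j * π / (2 * n))
  calc (j : ℝ) - discFreq j n
      ≤ j - 2 * n / π * (j * π / (2 * n) - (j * π / (2 * n)) ^ 3 / 6) := by
        rw [discFreq]; gcongr
    _ = π ^ 2 / 24 * (j / n * (j / n)) * j := by field_simp; ring
    _ ≤ 2 * (j / n * 1) * j := by gcongr
    _ = 2 * (j / n) * j := by rw [mul_one]

lemma neg_lamEig_le_sq (hn : 0 < n) (hj : j ≤ n) : -lamEig j n ≤ (j : ℝ) ^ 2 := by
  rw [neg_lamEig_eq_sq]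
  exact pow_le_pow_left₀ ((half_le_discFreq hn hj).trans' (by positivity)) (discFreq_le hn j) 2

lemma sq_le_four_mul_neg_lamEig (hn : 0 < n) (hj : j ≤ n) : (j : ℝ) ^ 2 ≤ 4 * -lamEig j n := by
  have hsq := pow_le_pow_left₀ (by positivity) (half_le_discFreq hn hj) 2
  rw [neg_lamEig_eq_sq]
  linarith

lemma sq_sub_neg_lamEig_le (hn : 0 < n) (hj : j ≤ n) :
    (j : ℝ) ^ 2 - -lamEig j n ≤ 4 * (j / n) * (j : ℝ) ^ 2 := by
  rw [neg_lamEig_eq_sq, sq_sub_sq, mul_comm]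
  calc _ ≤ 2 * (j / n) * j * ((j : ℝ) + j) :=
        mul_le_mul (sub_discFreq_le hn hj) (by linarith [discFreq_le hn j])
          (by linarith [half_le_discFreq hn hj, j.cast_nonneg (α := ℝ)]) (by positivity)
    _ = 4 * (j / n) * (j : ℝ) ^ 2 := by ring

end Discrete

/-! ### Spectral multipliers -/

/-- The multiplier `m ^ r * exp (-m² s)` by which `A ^ r e^{-s A²}` acts on an eigenvector of `A`
of eigenvalue `m`; with `A = -Δ` or its discretisation, `r = 0` and `r = 1` give the coefficients
of the Green functions and of their Laplacians. -/
def multiplier (r : ℕ) (s m : ℝ) : ℝ := m ^ r * exp (-(m ^ 2 * s))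

section Multiplier

variable {s m M ε : ℝ}

lemma multiplier_nonneg (r : ℕ) (s : ℝ) (hm : 0 ≤ m) : 0 ≤ multiplier r s m :=
  mul_nonneg (pow_nonneg hm r) (exp_nonneg _)

lemma pow_sub_pow_le_of_sub_le (r : ℕ) (hm : 0 ≤ m) (hmM : m ≤ M) (hε : M - m ≤ ε * M) :
    M ^ r - m ^ r ≤ r * (ε * M ^ r) := by
  cases r with
  | zero => simp
  | succ r =>
    have hM : 0 ≤ M := hm.trans hmM
    calc M ^ (r + 1) - m ^ (r + 1) ≤ |M ^ (r + 1) - m ^ (r + 1)| := le_abs_self _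
      _ ≤ (M - m) * (r + 1 : ℕ) * M ^ r := by
        simpa [abs_of_nonneg, hm, hM, hmM] using abs_pow_sub_pow_le M m (r + 1)
      _ ≤ ε * M * (r + 1 : ℕ) * M ^ r := by gcongr
      _ = (r + 1 : ℕ) * (ε * M ^ (r + 1)) := by ring

lemma exp_neg_sub_exp_neg_le (u v : ℝ) : exp (-u) - exp (-v) ≤ (v - u) * exp (-u) := by
  have hsplit : exp (-v) = exp (-u) * exp (u - v) := by rw [← exp_add]; ring_nf
  rw [hsplit]
  nlinarith [add_one_le_exp (u - v), exp_pos (-u)]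

lemma abs_multiplier_sub_le (r : ℕ) (hs : 0 ≤ s) (hm : 0 ≤ m) (hmM : m ≤ M)
    (hε : M - m ≤ ε * M) :
    |multiplier r s m - multiplier r s M|
      ≤ ε * M ^ r * (2 * (M ^ 2 * s) + r) * exp (-(m ^ 2 * s)) := by
  have hM : 0 ≤ M := hm.trans hmM
  have hpow_le : m ^ r ≤ M ^ r := pow_le_pow_left₀ hm hmM r
  have hsq_sub : M ^ 2 * s - m ^ 2 * s ≤ ε * (2 * (M ^ 2 * s)) := by
    calc M ^ 2 * s - m ^ 2 * s = (M - m) * (M + m) * s := by ring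
      _ ≤ ε * M * (M + M) * s :=
        mul_le_mul_of_nonneg_right (mul_le_mul hε (by linarith) (by linarith) (by linarith)) hs
      _ = ε * (2 * (M ^ 2 * s)) := by ring
  have hexp_le : exp (-(M ^ 2 * s)) ≤ exp (-(m ^ 2 * s)) := by gcongr
  calc |multiplier r s m - multiplier r s M|
      = |M ^ r * (exp (-(m ^ 2 * s)) - exp (-(M ^ 2 * s)))
          - (M ^ r - m ^ r) * exp (-(m ^ 2 * s))| := by
        simp only [multiplier]; ring_nf
    _ ≤ M ^ r * (exp (-(m ^ 2 * s)) - exp (-(M ^ 2 * s)))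
          + (M ^ r - m ^ r) * exp (-(m ^ 2 * s)) := by
        refine (abs_sub _ _).trans_eq ?_
        rw [abs_of_nonneg (mul_nonneg (pow_nonneg hM r) (sub_nonneg.2 hexp_le)),
          abs_of_nonneg (mul_nonneg (sub_nonneg.2 hpow_le) (exp_nonneg _))]
    _ ≤ M ^ r * (ε * (2 * (M ^ 2 * s)) * exp (-(m ^ 2 * s)))
          + r * (ε * M ^ r) * exp (-(m ^ 2 * s)) := by
        gcongr
        · exact (exp_neg_sub_exp_neg_le _ _).trans (by gcongr)
        · exact pow_sub_pow_le_of_sub_le r hm hmM hε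
    _ = ε * M ^ r * (2 * (M ^ 2 * s) + r) * exp (-(m ^ 2 * s)) := by ring

lemma sq_mul_div_le (hs : 0 ≤ s) (hM : 0 ≤ M) (hMm : M ≤ 4 * m) :
    M ^ 2 * s / 16 ≤ m ^ 2 * s := by
  have hsq : M ^ 2 ≤ 16 * m ^ 2 := by nlinarith
  nlinarith

lemma two_mul_add_le_mul_exp (r : ℕ) {u : ℝ} (hu : 0 ≤ u) :
    2 * u + (r + 1) ≤ (r + 65) * exp (u / 32) := by
  have hexp := add_one_le_exp (u / 32)
  nlinarith [mul_nonneg (r.cast_nonneg (α := ℝ)) hu, r.cast_nonneg (α := ℝ)]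

lemma abs_multiplier_mul_sub_le (r : ℕ) (hs : 0 ≤ s) (hm : 0 ≤ m) (hmM : m ≤ M) (hMm : M ≤ 4 * m)
    (hε : M - m ≤ ε * M) {p q : ℝ} (hp : |p| ≤ 1) (hpq : |p - q| ≤ ε) :
    |multiplier r s m * p - multiplier r s M * q|
      ≤ (r + 65) * ε * (M ^ r * exp (-(M ^ 2 * s / 32))) := by
  have hM : 0 ≤ M := hm.trans hmM
  have hε0 : 0 ≤ ε := (abs_nonneg _).trans hpq
  have hMs : 0 ≤ M ^ 2 * s := by positivity
  calc |multiplier r s m * p - multiplier r s M * q|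
      = |(multiplier r s m - multiplier r s M) * p + multiplier r s M * (p - q)| := by ring_nf
    _ ≤ |multiplier r s m - multiplier r s M| * |p| + multiplier r s M * |p - q| := by
        refine (abs_add_le _ _).trans_eq ?_
        rw [abs_mul, abs_mul, abs_of_nonneg (multiplier_nonneg r s hM)]
    _ ≤ ε * M ^ r * (2 * (M ^ 2 * s) + r) * exp (-(M ^ 2 * s / 16)) * 1
          + M ^ r * exp (-(M ^ 2 * s / 16)) * ε := by
        gcongr
        · refine (abs_multiplier_sub_le r hs hm hmM hε).trans ?_
          gcongr
          exact sq_mul_div_le hs hM hMm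
        · unfold multiplier
          gcongr
          linarith
    _ = ε * M ^ r * (2 * (M ^ 2 * s) + (r + 1)) * exp (-(M ^ 2 * s / 16)) := by ring
    _ ≤ ε * M ^ r * ((r + 65) * exp (M ^ 2 * s / 32)) * exp (-(M ^ 2 * s / 16)) := by
        gcongr
        exact two_mul_add_le_mul_exp r hMs
    _ = (r + 65) * ε * (M ^ r * (exp (M ^ 2 * s / 32) * exp (-(M ^ 2 * s / 16)))) := by ring
    _ = (r + 65) * ε * (M ^ r * exp (-(M ^ 2 * s / 32))) := by rw [← exp_add]; ring_nf

end Multiplier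

/-! ### Coefficients of the Green functions -/

/-- The sine coefficients, in the second variable, of `(-Δₙ) ^ r` applied to the discrete Green
function at time `s`, extended by zero beyond the `n - 1` discrete modes. -/
def discCoeff (r n : ℕ) (s x : ℝ) (j : ℕ) : ℝ :=
  if j + 1 < n then multiplier r s (-lamEig (j + 1) n) * phiIn n (j + 1) x else 0

/-- The sine coefficients, in the second variable, of `(-Δ) ^ r` applied to the Green function at
time `s`. -/
def contCoeff (r : ℕ) (s x : ℝ) (j : ℕ) : ℝ :=
  multiplier r s ((j + 1) ^ 2) * phiF (j + 1) x

/-- The sequence `J ^ k * exp (-J⁴ τ)` with `J = j + 1`, which majorises the coefficients of the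
Green functions and their errors. -/
def heatMode (k : ℕ) (τ : ℝ) (j : ℕ) : ℝ := (j + 1 : ℝ) ^ k * exp (-((j + 1 : ℝ) ^ 4 * τ))

lemma heatMode_nonneg (k : ℕ) (τ : ℝ) (j : ℕ) : 0 ≤ heatMode k τ j := by
  unfold heatMode; positivity

lemma GF_eq_sineSeries (s x y : ℝ) : GF s x y = sineSeries (contCoeff 0 s x) y := by
  simp only [GF, sineSeries, contCoeff, multiplier]
  congr 1 with j
  ring_nf

lemma DGF_eq_neg_sineSeries (s x y : ℝ) : DGF s x y = -sineSeries (contCoeff 1 s x) y := by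
  simp only [DGF, sineSeries, contCoeff, multiplier]
  congr 2 with j
  ring_nf

lemma sineSeries_discCoeff (r n : ℕ) (s x y : ℝ) :
    sineSeries (discCoeff r n s x) y = ∑ j ∈ Finset.range (n - 1),
      multiplier r s (-lamEig (j + 1) n) * phiIn n (j + 1) x * phiF (j + 1) y := by
  have hlt : ∀ j, j ∈ Finset.range (n - 1) ↔ j + 1 < n := fun j => by
    rw [Finset.mem_range]; lia
  rw [sineSeries, tsum_eq_sum fun j hj => by rw [discCoeff, if_neg (mt (hlt j).2 hj), zero_mul]]
  exact Finset.sum_congr rfl fun j hj => by rw [discCoeff, if_pos ((hlt j).1 hj)]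

lemma Gn_eq_sineSeries (n : ℕ) (s x y : ℝ) :
    Gn n s x y = sineSeries (discCoeff 0 n s x) (kap n y) := by
  simp only [Gn, sineSeries_discCoeff, multiplier, pow_zero, one_mul, neg_sq, neg_mul]

lemma DGn_eq_neg_sineSeries (n : ℕ) (s x y : ℝ) :
    DGn n s x y = -sineSeries (discCoeff 1 n s x) (kap n y) := by
  simp only [DGn, sineSeries_discCoeff, multiplier, pow_one, neg_sq, neg_mul,
    Finset.sum_neg_distrib, neg_neg]

section CoefficientBounds

variable {n j : ℕ} {s : ℝ}

lemma succ_mul_abs_multiplier_mul_le (r : ℕ) (hs : 0 ≤ s) {m p : ℝ} (hm : m ≤ (j + 1 : ℝ) ^ 2)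
    (hm4 : (j + 1 : ℝ) ^ 2 ≤ 4 * m) (hp : |p| ≤ 1) :
    (j + 1 : ℝ) * |multiplier r s m * p| ≤ heatMode (2 * r + 1) (s / 32) j := by
  have hm0 : 0 ≤ m := by linarith [sq_nonneg (j + 1 : ℝ)]
  rw [abs_mul, abs_of_nonneg (multiplier_nonneg r s hm0)]
  calc (j + 1 : ℝ) * (multiplier r s m * |p|)
      ≤ (j + 1 : ℝ) * (((j + 1 : ℝ) ^ 2) ^ r * exp (-(((j + 1 : ℝ) ^ 2) ^ 2 * s / 16)) * 1) := by
        unfold multiplier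
        gcongr
        exact sq_mul_div_le hs (sq_nonneg _) hm4
    _ = (j + 1 : ℝ) ^ (2 * r + 1) * exp (-((j + 1 : ℝ) ^ 4 * s / 16)) := by
        rw [mul_one, ← mul_assoc, ← pow_mul, ← pow_mul, ← pow_succ']
    _ ≤ heatMode (2 * r + 1) (s / 32) j := by
        unfold heatMode
        gcongr
        linarith [show 0 ≤ (j + 1 : ℝ) ^ 4 * s by positivity]

lemma succ_mul_abs_contCoeff_le (r : ℕ) (hs : 0 ≤ s) (x : ℝ) (j : ℕ) :
    (j + 1 : ℝ) * |contCoeff r s x j| ≤ heatMode (2 * r + 1) (s / 32) j :=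
  succ_mul_abs_multiplier_mul_le r hs le_rfl (by linarith [sq_nonneg (j + 1 : ℝ)])
    (abs_phiF_le_one _ _)

lemma succ_mul_abs_discCoeff_le (r n : ℕ) (hs : 0 ≤ s) (x : ℝ) (j : ℕ) :
    (j + 1 : ℝ) * |discCoeff r n s x j| ≤ heatMode (2 * r + 1) (s / 32) j := by
  unfold discCoeff
  split_ifs with hj
  · have hn : 0 < n := by lia
    exact succ_mul_abs_multiplier_mul_le r hs
      (by exact_mod_cast neg_lamEig_le_sq hn hj.le)
      (by exact_mod_cast sq_le_four_mul_neg_lamEig hn hj.le) (abs_phiIn_le_one hn _ _)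
  · rw [abs_zero, mul_zero]
    exact heatMode_nonneg _ _ _

lemma natCast_mul_abs_discCoeff_sub_contCoeff_le (r : ℕ) {n : ℕ} (hn : 0 < n) (hs : 0 ≤ s) (x : ℝ)
    (j : ℕ) :
    n * |discCoeff r n s x j - contCoeff r s x j|
      ≤ 4 * (r + 65) * heatMode (2 * r + 1) (s / 32) j := by
  by_cases hj : j + 1 < n
  · have hle := neg_lamEig_le_sq hn hj.le
    have hge := sq_le_four_mul_neg_lamEig hn hj.le
    have hsub := sq_sub_neg_lamEig_le hn hj.le
    have hφ : |phiIn n (j + 1) x - phiF (j + 1) x| ≤ 4 * ((j + 1 : ℕ) / n) :=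
      calc |phiIn n (j + 1) x - phiF (j + 1) x| ≤ (j + 1 : ℕ) * (π / n) :=
            abs_phiIn_sub_phiF_le hn _ x
        _ ≤ (j + 1 : ℕ) * (4 / n) := by gcongr; exact pi_le_four
        _ = 4 * ((j + 1 : ℕ) / n) := by ring
    have hdiff := abs_multiplier_mul_sub_le r hs (by linarith [sq_nonneg ((j + 1 : ℕ) : ℝ)]) hle
      hge hsub (abs_phiIn_le_one hn _ x) hφ
    rw [discCoeff, if_pos hj, contCoeff, heatMode, ← Nat.cast_succ]
    have hexp : (((j + 1 : ℕ) : ℝ) ^ 2) ^ 2 * s / 32 = (j + 1 : ℕ) ^ 4 * (s / 32) := by ring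
    rw [hexp] at hdiff
    refine (mul_le_mul_of_nonneg_left hdiff n.cast_nonneg).trans_eq ?_
    field_simp
    ring
  · have hnj : (n : ℝ) ≤ j + 1 := by exact_mod_cast not_lt.1 hj
    rw [discCoeff, if_neg hj, zero_sub, abs_neg]
    calc n * |contCoeff r s x j| ≤ (j + 1 : ℝ) * |contCoeff r s x j| := by gcongr
      _ ≤ heatMode (2 * r + 1) (s / 32) j := succ_mul_abs_contCoeff_le r hs x j
      _ ≤ 4 * (r + 65) * heatMode (2 * r + 1) (s / 32) j :=
        le_mul_of_one_le_left (heatMode_nonneg _ _ _) (by linarith [r.cast_nonneg (α := ℝ)])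

end CoefficientBounds

/-! ### Decay of the majorant -/

section HeatMode

variable {p τ : ℝ}

lemma rpow_mul_exp_neg_le {v : ℝ} (hp : 0 < p) (hv : 0 ≤ v) : v ^ p * exp (-v) ≤ p ^ p := by
  have hle : v ≤ p * exp (v / p) := by
    rw [← div_le_iff₀' hp]
    linarith [add_one_le_exp (v / p)]
  calc v ^ p * exp (-v) ≤ (p * exp (v / p)) ^ p * exp (-v) := by gcongr
    _ = p ^ p * (exp v * exp (-v)) := by
      rw [mul_rpow hp.le (exp_nonneg _), ← exp_mul, div_mul_cancel₀ v hp.ne', mul_assoc]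
    _ = p ^ p := by rw [← exp_add, add_neg_cancel, exp_zero, mul_one]

lemma sq_heatMode_le (k : ℕ) (hp : 0 < p) (hτ : 0 < τ) (j : ℕ) :
    heatMode k τ j ^ 2 ≤ p ^ p * (j + 1 : ℝ) ^ (2 * k - 4 * p) * (τ ^ (-p) * exp (-τ)) := by
  have hJ : (1 : ℝ) ≤ j + 1 := by simp
  have hJ0 : (0 : ℝ) < j + 1 := by linarith
  set v : ℝ := (j + 1 : ℝ) ^ 4 * τ with hv
  have hv0 : 0 < v := by positivity
  have hexp_le : exp (-v) ≤ exp (-τ) :=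
    exp_le_exp.2 (neg_le_neg (le_mul_of_one_le_left hτ.le (one_le_pow₀ hJ)))
  have hdecay : exp (-v) ≤ p ^ p * ((j + 1 : ℝ) ^ (-(4 * p)) * τ ^ (-p)) := by
    have hvp : v ^ (-p) = (j + 1 : ℝ) ^ (-(4 * p)) * τ ^ (-p) := by
      rw [hv, mul_rpow (by positivity) hτ.le, ← rpow_natCast, ← rpow_mul hJ0.le]
      norm_num
    rw [← hvp, rpow_neg hv0.le, ← div_eq_mul_inv, le_div_iff₀' (by positivity)]
    exact rpow_mul_exp_neg_le hp hv0.le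
  calc heatMode k τ j ^ 2 = (j + 1 : ℝ) ^ (2 * k) * (exp (-v) * exp (-v)) := by
        rw [heatMode]; ring
    _ ≤ (j + 1 : ℝ) ^ (2 * k) * (p ^ p * ((j + 1 : ℝ) ^ (-(4 * p)) * τ ^ (-p)) * exp (-τ)) := by
        gcongr
    _ = p ^ p * ((j + 1 : ℝ) ^ (2 * k) * (j + 1 : ℝ) ^ (-(4 * p))) * (τ ^ (-p) * exp (-τ)) := by
        ring
    _ = p ^ p * (j + 1 : ℝ) ^ (2 * k - 4 * p) * (τ ^ (-p) * exp (-τ)) := by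
        rw [← rpow_natCast, ← rpow_add hJ0]
        push_cast
        rw [sub_eq_add_neg]

lemma summable_heatMode (k : ℕ) (hτ : 0 < τ) : Summable (heatMode k τ) := by
  have hgeom := (summable_nat_add_iff 1).2 (summable_pow_mul_exp_neg_nat_mul k hτ)
  refine hgeom.of_nonneg_of_le (heatMode_nonneg k τ) fun j => ?_
  rw [heatMode, Nat.cast_succ]
  gcongr
  have : (j + 1 : ℝ) ≤ (j + 1) ^ 4 := le_self_pow₀ (by simp) (by norm_num)
  nlinarith

lemma exists_tsum_sq_heatMode_le (k : ℕ) (hp : 2 * k + 1 < 4 * p) :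
    ∃ K : ℝ, 0 < K ∧ ∀ τ, 0 < τ → ∑' j, heatMode k τ j ^ 2 ≤ K * (τ ^ (-p) * exp (-τ)) := by
  have hp0 : 0 < p := by linarith [k.cast_nonneg (α := ℝ)]
  have hpow : Summable fun j : ℕ => (j + 1 : ℝ) ^ (2 * k - 4 * p) := by
    exact_mod_cast (summable_nat_add_iff 1).2 (Real.summable_nat_rpow.2 (by push_cast; linarith))
  have hpow_pos : 0 < ∑' j : ℕ, (j + 1 : ℝ) ^ (2 * k - 4 * p) :=
    hpow.tsum_pos (fun j => by positivity) 0 (by positivity)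
  refine ⟨p ^ p * ∑' j : ℕ, (j + 1 : ℝ) ^ (2 * k - 4 * p), by positivity, fun τ hτ => ?_⟩
  have hmajor := (hpow.mul_left (p ^ p)).mul_right (τ ^ (-p) * exp (-τ))
  rw [← tsum_mul_left, ← tsum_mul_right]
  exact (hmajor.of_nonneg_of_le (fun _ => sq_nonneg _) (sq_heatMode_le k hp0 hτ)).tsum_le_tsum
    (sq_heatMode_le k hp0 hτ) hmajor

end HeatMode

/-! ### Integration in time -/

lemma intervalIntegral_le_of_le_rpow_mul_exp {F : ℝ → ℝ} {A c p t : ℝ} (hp : p < 1) (hc : 0 < c)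
    (ht : 0 ≤ t) (hF : ∀ s, 0 ≤ F s)
    (hFA : ∀ s, 0 < s → F s ≤ A * (s ^ (-p) * exp (-(s / c)))) :
    ∫ s in (0 : ℝ)..t, F s ≤ A * (c ^ (1 - p) * Gamma (1 - p)) := by
  have hform : ∀ s, s ^ (1 - p - 1) * exp (-(c⁻¹ * s)) = s ^ (-p) * exp (-(s / c)) := fun s => by
    ring_nf
  have hint : IntegrableOn (fun s => s ^ (-p) * exp (-(s / c))) (Set.Ioi 0) := by
    simpa only [rpow_one, neg_mul, hform] using
      integrableOn_rpow_mul_exp_neg_mul_rpow (by linarith : -1 < 1 - p - 1) one_pos (inv_pos.2 hc)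
  have hvalue : ∫ s in Set.Ioi 0, s ^ (-p) * exp (-(s / c)) = c ^ (1 - p) * Gamma (1 - p) := by
    simpa only [hform, one_div, inv_inv] using
      integral_rpow_mul_exp_neg_mul_Ioi (sub_pos.2 hp) (inv_pos.2 hc)
  have hsub : Set.Ioc 0 t ⊆ Set.Ioi 0 := Set.Ioc_subset_Ioi_self
  rw [intervalIntegral.integral_of_le ht, ← hvalue, ← MeasureTheory.integral_const_mul]
  calc ∫ s in Set.Ioc 0 t, F s ≤ ∫ s in Set.Ioc 0 t, A * (s ^ (-p) * exp (-(s / c))) :=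
        integral_mono_of_nonneg (Filter.Eventually.of_forall hF) ((hint.mono_set hsub).const_mul A)
          (ae_restrict_of_forall_mem measurableSet_Ioc fun s hs => hFA s hs.1)
    _ ≤ ∫ s in Set.Ioi 0, A * (s ^ (-p) * exp (-(s / c))) :=
        setIntegral_mono_set (hint.const_mul A)
          (ae_restrict_of_forall_mem measurableSet_Ioi fun s hs => (hF s).trans (hFA s hs))
          hsub.eventuallyLE

/-! ### The error of the discrete Green functions -/

section Error

variable {p : ℝ}

lemma summable_contCoeff (r : ℕ) {s : ℝ} (hs : 0 < s) (x : ℝ) : Summable (contCoeff r s x) :=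
  .of_norm_bounded (summable_heatMode (2 * r + 1) (by positivity : 0 < s / 32)) fun j =>
    (le_mul_of_one_le_left (norm_nonneg _) (by simp)).trans (succ_mul_abs_contCoeff_le r hs.le x j)

lemma summable_discCoeff (r n : ℕ) {s : ℝ} (hs : 0 < s) (x : ℝ) : Summable (discCoeff r n s x) :=
  .of_norm_bounded (summable_heatMode (2 * r + 1) (by positivity : 0 < s / 32)) fun j =>
    (le_mul_of_one_le_left (norm_nonneg _) (by simp)).trans
      (succ_mul_abs_discCoeff_le r n hs.le x j)

lemma exists_integral_sq_sineSeries_sub_le (r : ℕ) (hp : r + 3 / 4 < p) :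
    ∃ K : ℝ, 0 < K ∧ ∀ n : ℕ, 0 < n → ∀ s, 0 < s → ∀ x,
      ∫ y in (0 : ℝ)..π,
        (sineSeries (discCoeff r n s x) (kap n y) - sineSeries (contCoeff r s x) y) ^ 2
      ≤ K * ((n : ℝ) ^ 2)⁻¹ * (s ^ (-p) * exp (-(s / 32))) := by
  obtain ⟨K, hK, hdecay⟩ := exists_tsum_sq_heatMode_le (2 * r + 1) (p := p)
    (by push_cast; linarith)
  refine ⟨2 * (π ^ 2 + 1) * (4 * (r + 65)) ^ 2 * K * 32 ^ p, by positivity,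
    fun n hn s hs x => ?_⟩
  have hτ : 0 < s / 32 := by positivity
  have hscale : (s / 32) ^ (-p) = 32 ^ p * s ^ (-p) := by
    rw [div_rpow hs.le (by norm_num), rpow_neg (by norm_num : (0 : ℝ) ≤ 32), div_inv_eq_mul,
      mul_comm]
  have hdisc : ∀ j : ℕ, (j + 1) * |discCoeff r n s x j|
      ≤ 4 * (r + 65) * heatMode (2 * r + 1) (s / 32) j := fun j =>
    (succ_mul_abs_discCoeff_le r n hs.le x j).trans
      (le_mul_of_one_le_left (heatMode_nonneg _ _ _) (by linarith [r.cast_nonneg (α := ℝ)]))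
  refine (integral_sq_sineSeries_comp_kap_sub_sineSeries_le_of_abs_le hn
    ((summable_heatMode _ hτ).mul_left _) (summable_contCoeff r hs x) hdisc
    (natCast_mul_abs_discCoeff_sub_contCoeff_le r hn hs.le x)).trans ?_
  simp only [mul_pow _ (heatMode _ _ _), tsum_mul_left]
  calc 2 * (π ^ 2 + 1) * ((n : ℝ) ^ 2)⁻¹
        * ((4 * (r + 65)) ^ 2 * ∑' j, heatMode (2 * r + 1) (s / 32) j ^ 2)
      ≤ 2 * (π ^ 2 + 1) * ((n : ℝ) ^ 2)⁻¹
        * ((4 * (r + 65)) ^ 2 * (K * ((s / 32) ^ (-p) * exp (-(s / 32))))) := by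
        gcongr
        exact hdecay _ hτ
    _ = _ := by rw [hscale]; ring

lemma exists_integral_abs_sineSeries_sub_le (r : ℕ) (hp : r + 3 / 4 < p) :
    ∃ K : ℝ, 0 < K ∧ ∀ n : ℕ, 0 < n → ∀ s, 0 < s → ∀ x,
      ∫ y in (0 : ℝ)..π,
        |sineSeries (discCoeff r n s x) (kap n y) - sineSeries (contCoeff r s x) y|
      ≤ K * (n : ℝ)⁻¹ * (s ^ (-(p / 2)) * exp (-(s / 64))) := by
  obtain ⟨K, hK, hsq⟩ := exists_integral_sq_sineSeries_sub_le r hp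
  refine ⟨√(π * K), by positivity, fun n hn s hs x => ?_⟩
  have hdisc := continuous_sineSeries (summable_discCoeff r n hs x)
  have hcont := continuous_sineSeries (summable_contCoeff r hs x)
  set D : ℝ → ℝ → ℝ := fun z y =>
    sineSeries (discCoeff r n s x) z - sineSeries (contCoeff r s x) y
  have hint : IntervalIntegrable (fun y => |D (kap n y) y|) volume 0 π :=
    intervalIntegrable_comp_kap hn (F := fun z y => |D z y|) (by fun_prop) 0 π
  have hint_sq : IntervalIntegrable (fun y => |D (kap n y) y| ^ 2) volume 0 π :=
    intervalIntegrable_comp_kap hn (F := fun z y => |D z y| ^ 2) (by fun_prop) 0 π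
  refine (le_abs_self _).trans (abs_le_of_sq_le_sq ?_ (by positivity))
  calc (∫ y in (0 : ℝ)..π, |D (kap n y) y|) ^ 2
      ≤ (π - 0) * ∫ y in (0 : ℝ)..π, |D (kap n y) y| ^ 2 :=
        sq_intervalIntegral_le pi_pos.le hint hint_sq
    _ ≤ π * (K * ((n : ℝ) ^ 2)⁻¹ * (s ^ (-p) * exp (-(s / 32)))) := by
        simp only [sub_zero, sq_abs]
        exact mul_le_mul_of_nonneg_left (hsq n hn s hs x) pi_pos.le
    _ = (√(π * K) * (n : ℝ)⁻¹ * (s ^ (-(p / 2)) * exp (-(s / 64)))) ^ 2 := by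
        have hrpow : (s ^ (-(p / 2))) ^ 2 = s ^ (-p) := by
          rw [← rpow_natCast, ← rpow_mul hs.le]; ring_nf
        have hexp : exp (-(s / 64)) ^ 2 = exp (-(s / 32)) := by
          rw [← exp_nat_mul]; ring_nf
        rw [mul_pow, mul_pow, mul_pow, sq_sqrt (by positivity), hrpow, hexp, inv_pow]
        ring

end Error

theorem stmt16_general :
    ∃ C : ℝ, 0 < C ∧ ∀ n : ℕ, 0 < n → ∀ t : ℝ, 0 ≤ t → ∀ x : ℝ,
      ((∫ s in (0 : ℝ)..t, ∫ y in (0 : ℝ)..π, |DGn n s x y - DGF s x y|) ≤ C * (n : ℝ)⁻¹)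
      ∧ ((∫ s in (0 : ℝ)..t, ∫ y in (0 : ℝ)..π, (Gn n s x y - GF s x y) ^ 2)
          ≤ C * ((n : ℝ) ^ 2)⁻¹) := by
  obtain ⟨K₁, hK₁, hL1⟩ := exists_integral_abs_sineSeries_sub_le 1 (p := 15 / 8) (by norm_num)
  obtain ⟨K₂, hK₂, hL2⟩ := exists_integral_sq_sineSeries_sub_le 0 (p := 7 / 8) (by norm_num)
  set I₁ : ℝ := 64 ^ (1 - 15 / 8 / 2 : ℝ) * Gamma (1 - 15 / 8 / 2)
  set I₂ : ℝ := 32 ^ (1 - 7 / 8 : ℝ) * Gamma (1 - 7 / 8)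
  have hI₁ : 0 < I₁ := mul_pos (by positivity) (Gamma_pos_of_pos (by norm_num))
  have hI₂ : 0 < I₂ := mul_pos (by positivity) (Gamma_pos_of_pos (by norm_num))
  refine ⟨K₁ * I₁ + K₂ * I₂, by positivity, fun n hn t ht x => ⟨?_, ?_⟩⟩
  · calc ∫ s in (0 : ℝ)..t, ∫ y in (0 : ℝ)..π, |DGn n s x y - DGF s x y|
        ≤ K₁ * (n : ℝ)⁻¹ * I₁ := by
          simp only [DGn_eq_neg_sineSeries, DGF_eq_neg_sineSeries, ← neg_sub', abs_neg]
          exact intervalIntegral_le_of_le_rpow_mul_exp (by norm_num) (by norm_num) ht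
            (fun s => intervalIntegral.integral_nonneg pi_pos.le fun y _ => abs_nonneg _)
            fun s hs => hL1 n hn s hs x
      _ ≤ (K₁ * I₁ + K₂ * I₂) * (n : ℝ)⁻¹ := by
          rw [mul_right_comm]
          gcongr
          exact le_add_of_nonneg_right (mul_pos hK₂ hI₂).le
  · calc ∫ s in (0 : ℝ)..t, ∫ y in (0 : ℝ)..π, (Gn n s x y - GF s x y) ^ 2
        ≤ K₂ * ((n : ℝ) ^ 2)⁻¹ * I₂ := by
          simp only [Gn_eq_sineSeries, GF_eq_sineSeries]
          exact intervalIntegral_le_of_le_rpow_mul_exp (by norm_num) (by norm_num) ht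
            (fun s => intervalIntegral.integral_nonneg pi_pos.le fun y _ => sq_nonneg _)
            fun s hs => hL2 n hn s hs x
      _ ≤ (K₁ * I₁ + K₂ * I₂) * ((n : ℝ) ^ 2)⁻¹ := by
          rw [mul_right_comm]
          gcongr
          exact le_add_of_nonneg_left (mul_pos hK₁ hI₁).le

/-- For every `T > 0` there is `C = C(T) > 0`, independent of `n`, such that for all
`n ≥ 2` and `(t,x) ∈ (0,T] × (0,π)`:
`∫₀ᵗ∫₀^π |Δ_nG^n_s(x,y) - ΔG_s(x,y)| dy ds ≤ C n⁻¹` and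
`∫₀ᵗ∫₀^π |G^n_s(x,y) - G_s(x,y)|² dy ds ≤ C n⁻²`. -/
theorem stmt16 (T : ℝ) (hT : 0 < T) :
    ∃ C : ℝ, 0 < C ∧ ∀ n : ℕ, 2 ≤ n → ∀ t ∈ Set.Ioc 0 T, ∀ x ∈ Set.Ioo 0 Real.pi,
      ((∫ s in (0:ℝ)..t, ∫ y in (0:ℝ)..Real.pi, |DGn n s x y - DGF s x y|)
          ≤ C * ((n : ℝ))⁻¹)
      ∧ ((∫ s in (0:ℝ)..t, ∫ y in (0:ℝ)..Real.pi, (Gn n s x y - GF s x y) ^ 2)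
          ≤ C * ((n : ℝ) ^ 2)⁻¹) := by
  obtain ⟨C, hC, hbound⟩ := stmt16_general
  exact ⟨C, hC, fun n hn t ht x _ => hbound n (by lia) t ht.1.le x⟩
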